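/- Let p ∈ ℤ[x] be irreducible over ℚ of degree e ≥ 2 and let ρ(n) = #{v ∈ ℤ/nℤ : p(v) ≡ 0 (mod n)}. Then there exists a constant D ≥ 1, depending only on p, such that ρ(m·n) ≤ D·ρ(m)·ρ(n) for all positive integers m and n. -/

import Mathlib

/-- The number of roots of the integer polynomial `P` modulo `n`. -/
noncomputable def rho (P : Polynomial ℤ) (n : ℕ) : ℕ :=
  Nat.card {v : ZMod n // Polynomial.aeval v P = 0}

open Polynomial in
/-- A Bezout identity over the integers between `P` and its derivative. -/
theorem rho_bezout (P : Polynomial ℤ)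
    (hirr : Irreducible (P.map (Int.castRingHom ℚ))) :
    ∃ (R : ℕ) (A B : Polynomial ℤ), 1 ≤ R ∧ A * P + B * derivative P = (R : Polynomial ℤ) := by
  have hsep : (P.map (Int.castRingHom ℚ)).Separable := hirr.separable
  obtain ⟨a, b, hab⟩ := hsep
  obtain ⟨c, hc⟩ := IsLocalization.integerNormalization_map_to_map (nonZeroDivisors ℤ) a
  obtain ⟨d, hd⟩ := IsLocalization.integerNormalization_map_to_map (nonZeroDivisors ℤ) b
  set A := IsLocalization.integerNormalization (nonZeroDivisors ℤ) a
  set B := IsLocalization.integerNormalization (nonZeroDivisors ℤ) b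
  have hc0 : (c : ℤ) ≠ 0 := nonZeroDivisors.coe_ne_zero c
  have hd0 : (d : ℤ) ≠ 0 := nonZeroDivisors.coe_ne_zero d
  have hcd : (c : ℤ) * d ≠ 0 := mul_ne_zero hc0 hd0
  have key : (C (d : ℤ) * A) * P + (C (c : ℤ) * B) * derivative P = C ((c : ℤ) * d) := by
    apply Polynomial.map_injective (Int.castRingHom ℚ) (Int.cast_injective)
    have hA : A.map (Int.castRingHom ℚ) = C ((c : ℤ) : ℚ) * a := by
      rw [C_eq_intCast, ← zsmul_eq_mul]; exact hc
    have hB : B.map (Int.castRingHom ℚ) = C ((d : ℤ) : ℚ) * b := by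
      rw [C_eq_intCast, ← zsmul_eq_mul]; exact hd
    rw [derivative_map] at hab
    rw [Polynomial.map_add, Polynomial.map_mul, Polynomial.map_mul, Polynomial.map_mul,
      Polynomial.map_mul, hA, hB, C_mul, Polynomial.map_mul, Polynomial.map_C, Polynomial.map_C,
      eq_intCast, eq_intCast]
    linear_combination (C ((c : ℤ) : ℚ) * C ((d : ℤ) : ℚ)) * hab
  refine ⟨((c : ℤ) * d).natAbs, C ((c : ℤ) * d).sign * (C (d : ℤ) * A),
    C ((c : ℤ) * d).sign * (C (c : ℤ) * B), Int.natAbs_pos.mpr hcd, ?_⟩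
  rw [mul_assoc (C _), mul_assoc (C (Int.sign _)) (C (c : ℤ) * B), ← mul_add, key, ← C_mul, Int.sign_mul_self]
  exact map_natCast C _

/-- The number of solutions of `R * h = 0` modulo `N` is at most `R`. -/
theorem card_ker_le (N R : ℕ) [NeZero N] (hR : 1 ≤ R) :
    (Finset.univ.filter fun h : ZMod N => (R : ZMod N) * h = 0).card ≤ R := by
  have hN : 0 < N := Nat.pos_of_ne_zero (NeZero.ne N)
  have hdvd : ∀ h : ZMod N, (R : ZMod N) * h = 0 → N ∣ R * h.val := by
    intro h hh
    rw [← ZMod.natCast_eq_zero_iff]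
    simpa using hh
  conv_rhs => rw [← Finset.card_range R]
  apply Finset.card_le_card_of_injOn (fun h => R * h.val / N)
  · intro h hh
    simp only [Finset.coe_range, Set.mem_Iio]
    rw [Nat.div_lt_iff_lt_mul hN]
    exact Nat.mul_lt_mul_of_pos_left (ZMod.val_lt h) hR
  · intro h hh k hk hhk
    simp only [Finset.coe_filter, Finset.mem_univ, true_and, Set.mem_ofPred_eq] at hh hk
    have h1 := (Nat.div_left_inj (hdvd h hh) (hdvd k hk)).mp hhk
    exact ZMod.val_injective N (Nat.eq_of_mul_eq_mul_left hR h1)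

/-- An element of `ZMod (m * n)` vanishing modulo `m` and modulo `n` has square zero. -/
theorem sq_zero_of_cast (m n : ℕ) [NeZero (m * n)] (h : ZMod (m * n))
    (hm : ZMod.castHom (dvd_mul_right m n) (ZMod m) h = 0)
    (hn : ZMod.castHom (dvd_mul_left n m) (ZMod n) h = 0) : h ^ 2 = 0 := by
  have e : ((h.val : ℕ) : ZMod (m * n)) = h := ZMod.natCast_zmod_val h
  rw [← e, map_natCast, ZMod.natCast_eq_zero_iff] at hm hn
  rw [← e, ← Nat.cast_pow, ZMod.natCast_eq_zero_iff, sq]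
  exact mul_dvd_mul hm hn

/-- for `P ∈ ℤ[x]` irreducible over `ℚ` of degree `≥ 2`, there is a constant
`D ≥ 1`, depending only on `P`, with `ρ(mn) ≤ D·ρ(m)·ρ(n)` for all positive integers `m, n`. -/
theorem rho_submultiplicative (P : Polynomial ℤ)
    (hirr : Irreducible (P.map (Int.castRingHom ℚ))) (hdeg : 2 ≤ P.natDegree) :
    ∃ D : ℝ, 1 ≤ D ∧ ∀ m n : ℕ, 1 ≤ m → 1 ≤ n →
      (rho P (m * n) : ℝ) ≤ D * rho P m * rho P n := by
  classical
  obtain ⟨R, A, B, hR, hAB⟩ := rho_bezout P hirr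
  refine ⟨R, by exact_mod_cast hR, ?_⟩
  intro m n hm hn
  have : NeZero m := ⟨by omega⟩
  have : NeZero n := ⟨by omega⟩
  have : NeZero (m * n) := ⟨Nat.mul_ne_zero (by omega) (by omega)⟩
  have hcard : ∀ k : ℕ, [NeZero k] → rho P k =
      (Finset.univ.filter fun v : ZMod k => Polynomial.aeval v P = 0).card := by
    intro k _
    rw [rho, Nat.card_eq_fintype_card, Fintype.card_subtype]
  have hroot : ∀ k : ℕ, ∀ f : ZMod (m * n) →+* ZMod k, ∀ v, Polynomial.aeval v P = 0 →
      Polynomial.aeval (f v) P = 0 := by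
    intro k f v hv
    have := Polynomial.aeval_algHom_apply f.toIntAlgHom v P
    rw [hv, map_zero] at this
    exact this
  set fm := ZMod.castHom (dvd_mul_right m n) (ZMod m) with hfm
  set fn := ZMod.castHom (dvd_mul_left n m) (ZMod n) with hfn
  have main : rho P (m * n) ≤ R * (rho P m * rho P n) := by
    rw [hcard, hcard m, hcard n, ← Finset.card_product]
    apply Finset.card_le_mul_card_image_of_maps_to (f := fun v => (fm v, fn v))
    · intro v hv
      simp only [Finset.mem_filter, Finset.mem_univ, true_and, Finset.coe_filter,
        Set.mem_ofPred_eq, Finset.mem_product, Finset.mem_coe] at hv ⊢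
      exact ⟨hroot _ _ _ hv, hroot _ _ _ hv⟩
    · rintro ⟨a, b⟩ -
      rcases Finset.eq_empty_or_nonempty (Finset.filter (fun v => (fm v, fn v) = (a, b))
        (Finset.univ.filter fun v : ZMod (m * n) => Polynomial.aeval v P = 0)) with he | ⟨w, hw⟩
      · rw [he]; simp
      refine le_trans ?_ (card_ker_le (m * n) R hR)
      apply Finset.card_le_card_of_injOn (fun v => v - w)
      · intro v hv
        simp only [Finset.mem_filter, Finset.mem_univ, true_and, Finset.coe_filter,
          Set.mem_ofPred_eq, Prod.mk.injEq] at hv hw ⊢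
        obtain ⟨hv0, hva, hvb⟩ := hv
        obtain ⟨hw0, hwa, hwb⟩ := hw
        have hsq : (v - w) ^ 2 = 0 := by
          apply sq_zero_of_cast m n
          · rw [map_sub, ← hfm, hva, hwa, sub_self]
          · rw [map_sub, ← hfn, hvb, hwb, sub_self]
        have ht := Polynomial.aeval_add_of_sq_eq_zero P w (v - w) hsq
        rw [add_sub_cancel, hv0, hw0, zero_add] at ht
        have hb := congrArg (Polynomial.aeval w) hAB
        simp only [map_add, map_mul, hw0, mul_zero, zero_add, map_natCast] at hb
        rw [← hb, mul_assoc, ← ht, mul_zero]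
      · intro x _ y _ hxy
        exact sub_left_injective hxy
  rw [mul_assoc]
  exact_mod_cast main
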